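/- Let Π be a transformation that is confluent and isomorphism-invariant, and let Π' be the transformation that applies Π exhaustively, i.e., F →_{Π'} F* iff F →_Π* F*. Then Π' is symmetry-preserving: for all F →_{Π'} F*, Aut_syn(F)_{{Lit(F*)}} = Aut_syn(F) and Aut_syn(F)↓_{Lit(F*)} ⊆ Aut_syn(F*). -/

import Mathlib

/-- A literal over a variable type `V`: a variable or its negation. -/
inductive Lit (V : Type) where
  | pos : V → Lit V
  | neg : V → Lit V
deriving DecidableEq

variable {V : Type} [DecidableEq V]

/-- Negation of a literal (so that double negation is the identity). -/
def Lit.negate : Lit V → Lit V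
  | .pos v => .neg v
  | .neg v => .pos v

/-- The underlying variable of a literal. -/
def Lit.var : Lit V → V
  | .pos v => v
  | .neg v => v

/-- A clause is a finite set of literals. -/
abbrev Clause (V : Type) := Finset (Lit V)

/-- A CNF formula is a finite set of clauses. -/
abbrev CNF (V : Type) := Finset (Clause V)

/-- `Var(F)`: the variables occurring in a formula. -/
def CNF.vars (F : CNF V) : Finset V := Finset.sup F (fun C => Finset.image Lit.var C)

/-- `Lit(F) = Var(F) ∪ {v̄ : v ∈ Var(F)}`. -/
def CNF.lits (F : CNF V) : Finset (Lit V) :=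
  Finset.image Lit.pos (CNF.vars F) ∪ Finset.image Lit.neg (CNF.vars F)

/-- The value of a literal under a complete assignment (given on the variables,
which determines a consistent complete assignment on all literals). -/
def Lit.val (σ : V → Bool) : Lit V → Bool
  | .pos v => σ v
  | .neg v => !(σ v)

/-- `C[σ]`: delete from `C` every literal mapped to `⊥` by `σ`
(i.e. keep `l` with `¬l ∉ σ`). -/
def Clause.reduce (σ : V → Bool) (C : Clause V) : Clause V :=
  Finset.filter (fun l => Lit.val σ (Lit.negate l) = false) C

/-- `F[σ]`: delete every clause containing a literal mapped to `⊤` by `σ`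
(for a complete assignment: every clause containing no false literal is kept)
and delete from each remaining clause every literal mapped to `⊥`. -/
def CNF.reduce (F : CNF V) (σ : V → Bool) : CNF V :=
  Finset.image (Clause.reduce σ) (Finset.filter (fun C => ∀ l ∈ C, Lit.val σ l = false) F)

/-- Apply a map on literals elementwise to clauses and formulas. -/
def CNF.map (φ : Lit V → Lit V) (F : CNF V) : CNF V :=
  Finset.image (fun C => Finset.image φ C) F

/-- `φ` is a syntactic symmetry of `F`: a bijection of `Lit(F)` respecting
negation with `φ(F) = F`. -/
def IsSynSym (F : CNF V) (φ : Lit V → Lit V) : Prop :=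
  Set.BijOn φ (CNF.lits F : Set (Lit V)) (CNF.lits F : Set (Lit V)) ∧
  (∀ l ∈ CNF.lits F, φ (Lit.negate l) = Lit.negate (φ l)) ∧
  CNF.map φ F = F

/-- `φ` is a semantic symmetry of `F`: a bijection of `Lit(F)` respecting
negation with `F[σ] = φ(F)[σ]` for every complete assignment `σ`. -/
def IsSemSym (F : CNF V) (φ : Lit V → Lit V) : Prop :=
  Set.BijOn φ (CNF.lits F : Set (Lit V)) (CNF.lits F : Set (Lit V)) ∧
  (∀ l ∈ CNF.lits F, φ (Lit.negate l) = Lit.negate (φ l)) ∧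
  ∀ σ : V → Bool, CNF.reduce F σ = CNF.reduce (CNF.map φ F) σ

/-- Extend a map defined on the literal set `S` by the identity outside `S`. -/
def extendId (S : Finset (Lit V)) (φ : Lit V → Lit V) : Lit V → Lit V :=
  fun l => if l ∈ S then φ l else l

/-- `F[l ↦ ⊤]`: delete every clause containing `l` and delete `l̄` from every
remaining clause. -/
def CNF.assignTrue (F : CNF V) (l : Lit V) : CNF V :=
  Finset.image (fun C => Finset.erase C (Lit.negate l)) (Finset.filter (fun C => l ∉ C) F)

/-- One application of a transformation `T`. -/
def TStep (T : CNF V → Set (CNF V)) (F F' : CNF V) : Prop := F' ∈ T F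

/-- Exhaustive application of `T`: a finite chain of applications ending in a
formula to which `T` is no longer applicable. -/
def TExhaust (T : CNF V → Set (CNF V)) (F Fs : CNF V) : Prop :=
  Relation.ReflTransGen (TStep T) F Fs ∧ T Fs = ∅

/-- `T` is confluent: exhaustive application yields a unique result. -/
def Confluent (T : CNF V → Set (CNF V)) : Prop :=
  ∀ F F₁ F₂ : CNF V, TExhaust T F F₁ → TExhaust T F F₂ → F₁ = F₂

/-- `T` is isomorphism-invariant: invariant under every negation-respecting
bijection of the literals over a finite superset of `Lit(F)` (equivalently,
every finitely supported negation-respecting bijection of all literals). -/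
def IsoInvariant (T : CNF V → Set (CNF V)) : Prop :=
  ∀ φ : Lit V → Lit V, Function.Bijective φ →
    (∀ l : Lit V, φ (Lit.negate l) = Lit.negate (φ l)) →
    {l : Lit V | φ l ≠ l}.Finite →
    ∀ F F' : CNF V, F' ∈ T F → CNF.map φ F' ∈ T (CNF.map φ F)

/-!
A syntactic symmetry of `F` is the same thing as the restriction to `Lit(F)` of a finitely supported
negation-respecting permutation `e` of all literals with `e(F) = F`: extend by the identity outside
`Lit(F)`. Isomorphism invariance lets `e` carry an exhaustive application `F →* F*` to an
exhaustive application `e(F) →* e(F*)`; as `e(F) = F`, confluence gives `e(F*) = F*`, and so `e`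
restricts to a symmetry of `F*` as well.
-/

namespace CNF

lemma mem_lits {F : CNF V} {l : Lit V} : l ∈ F.lits ↔ l.var ∈ F.vars := by
  cases l <;> simp [lits, Lit.var]

lemma negate_mem_lits {F : CNF V} {l : Lit V} : l.negate ∈ F.lits ↔ l ∈ F.lits := by
  cases l <;> simp only [mem_lits, Lit.negate, Lit.var]

lemma lits_mono {F G : CNF V} (h : F.vars ⊆ G.vars) : F.lits ⊆ G.lits :=
  fun _ hl => mem_lits.2 (h (mem_lits.1 hl))

lemma subset_lits {F : CNF V} {C : Clause V} (hC : C ∈ F) : C ⊆ F.lits := fun _ hl =>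
  mem_lits.2 (Finset.mem_sup.2 ⟨C, hC, Finset.mem_image_of_mem _ hl⟩)

lemma lits_eq_biUnion (F : CNF V) : F.lits = F.biUnion fun C => C ∪ C.image Lit.negate := by
  ext l
  simp only [mem_lits, vars, Finset.mem_sup, Finset.mem_biUnion, Finset.mem_union,
    Finset.mem_image]
  refine exists_congr fun C => and_congr_right fun _ => ⟨?_, ?_⟩
  · rintro ⟨k, hk, hkl⟩
    cases k <;> cases l <;> cases hkl
    exacts [.inl hk, .inr ⟨_, hk, rfl⟩, .inr ⟨_, hk, rfl⟩, .inl hk]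
  · rintro (hl | ⟨k, hk, rfl⟩)
    · exact ⟨l, hl, rfl⟩
    · exact ⟨k, hk, by cases k <;> rfl⟩

lemma map_congr {F : CNF V} {f g : Lit V → Lit V} (h : Set.EqOn f g F.lits) :
    F.map f = F.map g :=
  Finset.image_congr fun _ hC => Finset.image_congr (h.mono (subset_lits hC))

lemma map_id (F : CNF V) : F.map id = F := by
  simp only [map, Finset.image_id, Finset.image_id']

lemma map_map (F : CNF V) (f g : Lit V → Lit V) : (F.map g).map f = F.map (f ∘ g) := by
  simp only [map, Finset.image_image, Function.comp_def]

lemma lits_map (F : CNF V) {f : Lit V → Lit V} (hf : Function.Commute f Lit.negate) :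
    (F.map f).lits = F.lits.image f := by
  simp only [lits_eq_biUnion, map, Finset.image_biUnion, Finset.biUnion_image, Finset.image_union,
    Finset.image_image, hf.comp_eq]

end CNF

section extendId

variable {S : Finset (Lit V)} {φ : Lit V → Lit V}

lemma extendId_of_mem {l : Lit V} (hl : l ∈ S) : extendId S φ l = φ l := if_pos hl

lemma extendId_of_notMem {l : Lit V} (hl : l ∉ S) : extendId S φ l = l := if_neg hl

lemma extendId_bijective (hφ : Set.BijOn φ S S) : Function.Bijective (extendId S φ) := by
  let e : Equiv.Perm (Lit V) := Equiv.Perm.ofSubtype (p := (· ∈ (S : Set (Lit V)))) (hφ.equiv φ)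
  suffices h : extendId S φ = e from h ▸ e.bijective
  funext l
  by_cases hl : l ∈ S
  · rw [extendId_of_mem hl]
    exact (Equiv.Perm.ofSubtype_apply_of_mem (hφ.equiv φ) hl).symm
  · rw [extendId_of_notMem hl]
    exact (Equiv.Perm.ofSubtype_apply_of_not_mem (hφ.equiv φ) hl).symm

lemma extendId_commute_negate (hS : ∀ l, l.negate ∈ S ↔ l ∈ S)
    (hφ : ∀ l ∈ S, φ l.negate = (φ l).negate) :
    Function.Commute (extendId S φ) Lit.negate := fun l => by
  by_cases hl : l ∈ S
  · rw [extendId_of_mem hl, extendId_of_mem ((hS l).2 hl), hφ l hl]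
  · rw [extendId_of_notMem hl, extendId_of_notMem (mt (hS l).1 hl)]

lemma finite_setOf_extendId_ne : {l | extendId S φ l ≠ l}.Finite :=
  S.finite_toSet.subset fun _ hl => by_contra fun hlS => hl (extendId_of_notMem hlS)

end extendId

/-- A renaming of literals: a permutation of all literals that respects negation and moves only
finitely many literals. These are the permutations quantified over in `IsoInvariant`, bundled as
equivalences so that inverses are available. -/
structure IsRenaming (e : Equiv.Perm (Lit V)) : Prop where
  commute_negate : Function.Commute e Lit.negate
  finite_support : {l | e l ≠ l}.Finite

omit [DecidableEq V] in
lemma IsRenaming.symm {e : Equiv.Perm (Lit V)} (he : IsRenaming e) : IsRenaming e.symm where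
  commute_negate := he.commute_negate.inverse_left e.left_inv e.right_inv
  finite_support := (Equiv.Perm.set_support_symm_eq e).symm ▸ he.finite_support

lemma isSynSym_iff_exists_isRenaming {F : CNF V} {φ : Lit V → Lit V} :
    IsSynSym F φ ↔
      ∃ e : Equiv.Perm (Lit V), IsRenaming e ∧ Set.EqOn e φ F.lits ∧ F.map e = F := by
  constructor
  · rintro ⟨hbij, hneg, hmap⟩
    have hext : Set.EqOn (extendId F.lits φ) φ F.lits := fun _ => extendId_of_mem
    exact ⟨Equiv.ofBijective _ (extendId_bijective hbij),
      ⟨extendId_commute_negate (fun _ => CNF.negate_mem_lits) hneg, finite_setOf_extendId_ne⟩,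
      hext, (CNF.map_congr hext).trans hmap⟩
  · rintro ⟨e, he, heφ, hmap⟩
    have himage : e '' F.lits = F.lits := by
      rw [← Finset.coe_image, ← CNF.lits_map F he.commute_negate, hmap]
    have hbij : Set.BijOn e F.lits F.lits := by
      simpa only [himage] using e.injective.injOn.bijOn_image (s := (F.lits : Set (Lit V)))
    refine ⟨hbij.congr heφ, fun l hl => ?_, (CNF.map_congr heφ).symm.trans hmap⟩
    rw [← heφ hl, ← heφ (CNF.negate_mem_lits.2 hl), he.commute_negate]

section Transformation

variable {T : CNF V → Set (CNF V)} {F Fs : CNF V}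

lemma IsoInvariant.apply_map (hiso : IsoInvariant T) {e : Equiv.Perm (Lit V)} (he : IsRenaming e)
    (F : CNF V) : T (F.map e) = CNF.map e '' T F := by
  have map_mem {e : Equiv.Perm (Lit V)} (he : IsRenaming e) {F G : CNF V} (hG : G ∈ T F) :
      G.map e ∈ T (F.map e) :=
    hiso e e.bijective he.commute_negate he.finite_support F G hG
  refine Set.Subset.antisymm (fun G hG => ⟨G.map e.symm, ?_, ?_⟩) ?_
  · simpa only [CNF.map_map, e.symm_comp_self, CNF.map_id] using map_mem he.symm hG
  · rw [CNF.map_map, e.self_comp_symm, CNF.map_id]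
  · rintro _ ⟨G, hG, rfl⟩
    exact map_mem he hG

lemma TExhaust.map (h : TExhaust T F Fs) (hiso : IsoInvariant T) {e : Equiv.Perm (Lit V)}
    (he : IsRenaming e) : TExhaust T (F.map e) (Fs.map e) := by
  refine ⟨h.1.lift (CNF.map e) fun G G' hG => ?_, ?_⟩
  · exact (hiso.apply_map he G).ge (Set.mem_image_of_mem _ hG)
  · rw [hiso.apply_map he, h.2, Set.image_empty]

lemma vars_subset_of_reflTransGen (hvars : ∀ F F' : CNF V, F' ∈ T F → F'.vars ⊆ F.vars)
    (h : Relation.ReflTransGen (TStep T) F Fs) : Fs.vars ⊆ F.vars := by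
  induction h with
  | refl => exact subset_rfl
  | tail _ hstep ih => exact (hvars _ _ hstep).trans ih

theorem confluent_isoInvariant_exhaustive_symmetry_preserving_general
    (hconf : Confluent T) (hiso : IsoInvariant T) (h : TExhaust T F Fs)
    (hvars : Fs.vars ⊆ F.vars) {φ : Lit V → Lit V} (hφ : IsSynSym F φ) : IsSynSym Fs φ := by
  obtain ⟨e, he, heφ, hF⟩ := isSynSym_iff_exists_isRenaming.1 hφ
  have h_map : TExhaust T F (Fs.map e) := by simpa only [hF] using h.map hiso he
  exact isSynSym_iff_exists_isRenaming.2
    ⟨e, he, heφ.mono (CNF.lits_mono hvars), hconf F _ _ h_map h⟩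

end Transformation

/-- If a transformation `T` is confluent and
isomorphism-invariant, then exhaustive application of `T` is
symmetry-preserving: every syntactic symmetry of `F` setwise stabilizes
`Lit(F*)` (so `Aut_syn(F)_{{Lit(F*)}} = Aut_syn(F)`), and its restriction to
`Lit(F*)` is a syntactic symmetry of `F*`
(so `Aut_syn(F)↓_{Lit(F*)} ⊆ Aut_syn(F*)`). -/
theorem confluent_isoInvariant_exhaustive_symmetry_preserving
    (T : CNF V → Set (CNF V))
    (hvars : ∀ F F' : CNF V, F' ∈ T F → CNF.vars F' ⊆ CNF.vars F)
    (hfin : ∀ F : CNF V, (T F).Finite)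
    (hconf : Confluent T) (hiso : IsoInvariant T)
    (F Fs : CNF V) (h : TExhaust T F Fs) :
    (∀ φ : Lit V → Lit V, IsSynSym F φ →
        φ '' (CNF.lits Fs : Set (Lit V)) = (CNF.lits Fs : Set (Lit V))) ∧
    (∀ φ : Lit V → Lit V, IsSynSym F φ →
        φ '' (CNF.lits Fs : Set (Lit V)) = (CNF.lits Fs : Set (Lit V)) →
        IsSynSym Fs φ) := by
  have hsym {φ : Lit V → Lit V} : IsSynSym F φ → IsSynSym Fs φ :=
    confluent_isoInvariant_exhaustive_symmetry_preserving_general hconf hiso h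
      (vars_subset_of_reflTransGen hvars h.1)
  exact ⟨fun _ hφ => (hsym hφ).1.image_eq, fun _ hφ _ => hsym hφ⟩
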